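/- (Proposition 2, upper bound) Let L be a symmetric positive semidefinite real n×n matrix such that I − L is also positive semidefinite, let P = I − L, and let E(H) = trace(Hᵀ L H). Let λ₀ be a real number with 0 < λ₀ ≤ 1 such that every nonzero eigenvalue of L is at least λ₀. Then for every real n×d matrix X, every natural number l, and every real α with 0 ≤ α ≤ 1, E(αX + (1−α)P^l X) ≤ (α² + (1 − λ₀)^l) · E(X). -/

import Mathlib

open Matrix BigOperators

/-!
The final representation is `p(L) X` for the polynomial `p(x) = α + (1 - α) (1 - x) ^ l`, and
`E(p(L) X) = tr(Xᵀ p(L) L p(L) X)`, so it suffices to prove the operator inequality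
`p(L) L p(L) ≤ (α² + (1 - λ₀) ^ l) L`. By the functional calculus it can be checked on the spectrum
of `L`: at `x = 0` both sides vanish, and for `λ₀ ≤ x ≤ 1` the number `t = (1 - x) ^ l` lies between
`0` and `1` and is at most `(1 - λ₀) ^ l`, while
`α² + t - (α + (1 - α) t)² = (1 - α)² t (1 - t) + α² t ≥ 0`.
-/

section SpectralFilter

open Polynomial

/-- The spectral filter of the GPNN model as a polynomial in the Laplacian eigenvalue: the final
representation is `aeval L (gpnnFilter α l) * X`. -/
noncomputable def gpnnFilter (α : ℝ) (l : ℕ) : ℝ[X] :=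
  α • 1 + (1 - α) • (1 - X) ^ l

theorem eval_gpnnFilter (α : ℝ) (l : ℕ) (x : ℝ) :
    (gpnnFilter α l).eval x = α + (1 - α) * (1 - x) ^ l := by
  simp [gpnnFilter]

theorem aeval_gpnnFilter {A : Type*} [Ring A] [Algebra ℝ A] (α : ℝ) (l : ℕ) (a : A) :
    aeval a (gpnnFilter α l) = α • 1 + (1 - α) • (1 - a) ^ l := by
  simp only [gpnnFilter, map_add, map_smul, map_pow, map_sub, map_one, aeval_X]

theorem sq_add_one_sub_mul_le {R : Type*} [CommRing R] [LinearOrder R] [IsStrictOrderedRing R]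
    (α : R) {t : R} (ht₀ : 0 ≤ t) (ht₁ : t ≤ 1) :
    (α + (1 - α) * t) ^ 2 ≤ α ^ 2 + t := by
  have hdiff : 0 ≤ (1 - α) ^ 2 * (t * (1 - t)) + α ^ 2 * t :=
    add_nonneg (mul_nonneg (sq_nonneg _) (mul_nonneg ht₀ (sub_nonneg.2 ht₁)))
      (mul_nonneg (sq_nonneg α) ht₀)
  linear_combination hdiff

theorem sq_eval_gpnnFilter_mul_le (α : ℝ) (l : ℕ) {lam0 x : ℝ} (hx₀ : 0 ≤ x) (hx₁ : x ≤ 1)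
    (hgap : x ≠ 0 → lam0 ≤ x) :
    (gpnnFilter α l).eval x ^ 2 * x ≤ (α ^ 2 + (1 - lam0) ^ l) * x := by
  obtain rfl | hx := eq_or_ne x 0
  · simp
  have hx' : 0 ≤ 1 - x := sub_nonneg.2 hx₁
  have hdecay : (1 - x) ^ l ≤ (1 - lam0) ^ l :=
    pow_le_pow_left₀ hx' (sub_le_sub_left (hgap hx) 1) l
  have hfilter : (gpnnFilter α l).eval x ^ 2 ≤ α ^ 2 + (1 - lam0) ^ l := calc
    (gpnnFilter α l).eval x ^ 2 = (α + (1 - α) * (1 - x) ^ l) ^ 2 := by rw [eval_gpnnFilter]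
    _ ≤ α ^ 2 + (1 - x) ^ l :=
      sq_add_one_sub_mul_le α (pow_nonneg hx' l) (pow_le_one₀ hx' (sub_le_self 1 hx₀))
    _ ≤ α ^ 2 + (1 - lam0) ^ l := by gcongr
  exact mul_le_mul_of_nonneg_right hfilter hx₀

end SpectralFilter

section FunctionalCalculus

open Polynomial

theorem isSelfAdjoint_aeval {R A : Type*} [CommSemiring R] [StarRing R] [TrivialStar R]
    [Semiring A] [StarRing A] [Algebra R A] [StarModule R A] {a : A} (ha : IsSelfAdjoint a)
    (p : R[X]) : IsSelfAdjoint (aeval a p) := by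
  simp [IsSelfAdjoint, aeval_eq_sum_range, ha.star_eq]

variable {A : Type*} [TopologicalSpace A] [Ring A] [StarRing A] [PartialOrder A]
  [StarOrderedRing A] [Algebra ℝ A] [ContinuousFunctionalCalculus ℝ A IsSelfAdjoint]

theorem aeval_le_aeval_of_eval_le_on_spectrum {a : A} (ha : IsSelfAdjoint a) {p q : ℝ[X]}
    (h : ∀ x ∈ spectrum ℝ a, p.eval x ≤ q.eval x) : aeval a p ≤ aeval a q := by
  rw [← cfc_polynomial p a, ← cfc_polynomial q a]
  exact cfc_mono h

theorem aeval_gpnnFilter_mul_mul_le [NonnegSpectrumClass ℝ A] {a : A} (ha₀ : 0 ≤ a) (ha₁ : a ≤ 1)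
    {lam0 : ℝ} (hgap : ∀ x ∈ spectrum ℝ a, x ≠ 0 → lam0 ≤ x) (α : ℝ) (l : ℕ) :
    aeval a (gpnnFilter α l) * a * aeval a (gpnnFilter α l) ≤ (α ^ 2 + (1 - lam0) ^ l) • a := by
  have ha : IsSelfAdjoint a := .of_nonneg ha₀
  have hle_one : ∀ x ∈ spectrum ℝ a, x ≤ 1 := (CFC.le_one_iff a).1 ha₁
  calc
    aeval a (gpnnFilter α l) * a * aeval a (gpnnFilter α l)
      = aeval a (gpnnFilter α l * X * gpnnFilter α l) := by simp only [map_mul, aeval_X]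
    _ ≤ aeval a (C (α ^ 2 + (1 - lam0) ^ l) * X) := by
      refine aeval_le_aeval_of_eval_le_on_spectrum ha fun x hx ↦ ?_
      simpa only [eval_mul, eval_X, eval_C, sq, mul_right_comm] using
        sq_eval_gpnnFilter_mul_le α l (spectrum_nonneg_of_nonneg ha₀ hx) (hle_one x hx) (hgap x hx)
    _ = (α ^ 2 + (1 - lam0) ^ l) • a := by rw [C_mul', map_smul, aeval_X]

end FunctionalCalculus

section DirichletEnergy

open scoped ComplexOrder MatrixOrder

variable {𝕜 m n : Type*} [RCLike 𝕜] [Fintype m] [Fintype n]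

/-- The Dirichlet energy of the feature matrix `H` with respect to the Laplacian `L`. It is
`𝕜`-valued, and real when `L` is Hermitian. -/
def dirichletEnergy (L : Matrix m m 𝕜) (H : Matrix m n 𝕜) : 𝕜 :=
  (Hᴴ * L * H).trace

theorem dirichletEnergy_mono {L M : Matrix m m 𝕜} (hLM : L ≤ M) (H : Matrix m n 𝕜) :
    dirichletEnergy L H ≤ dirichletEnergy M H := by
  have hdiff : 0 ≤ (Hᴴ * (M - L) * H).trace :=
    ((le_iff.1 hLM).conjTranspose_mul_mul_same H).trace_nonneg
  rwa [Matrix.mul_sub, Matrix.sub_mul, trace_sub, sub_nonneg] at hdiff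

theorem dirichletEnergy_smul (c : ℝ) (L : Matrix m m 𝕜) (H : Matrix m n 𝕜) :
    dirichletEnergy (c • L) H = c • dirichletEnergy L H := by
  simp only [dirichletEnergy, Matrix.mul_smul, Matrix.smul_mul, trace_smul]

theorem dirichletEnergy_mul (L M : Matrix m m 𝕜) (H : Matrix m n 𝕜) :
    dirichletEnergy L (M * H) = dirichletEnergy (Mᴴ * L * M) H := by
  simp only [dirichletEnergy, conjTranspose_mul, Matrix.mul_assoc]

theorem gpnn_energy_upper_bound_general [DecidableEq m] {L : Matrix m m 𝕜}
    (hL : L.PosSemidef) (hIL : (1 - L).PosSemidef) {lam0 : ℝ}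
    (hspec : ∀ μ ∈ spectrum ℝ L, μ ≠ 0 → lam0 ≤ μ) (X : Matrix m n 𝕜) (l : ℕ) (α : ℝ) :
    dirichletEnergy L (α • X + (1 - α) • ((1 - L) ^ l * X)) ≤
      (α ^ 2 + (1 - lam0) ^ l) • dirichletEnergy L X := by
  set M := Polynomial.aeval L (gpnnFilter α l) with hM
  have hrepr : α • X + (1 - α) • ((1 - L) ^ l * X) = M * X := by
    rw [hM, aeval_gpnnFilter, Matrix.add_mul, Matrix.smul_mul, Matrix.smul_mul, Matrix.one_mul]
  have hM_star : Mᴴ = M := isSelfAdjoint_aeval hL.isHermitian _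
  calc
    dirichletEnergy L (α • X + (1 - α) • ((1 - L) ^ l * X))
      = dirichletEnergy (M * L * M) X := by rw [hrepr, dirichletEnergy_mul, hM_star]
    _ ≤ dirichletEnergy ((α ^ 2 + (1 - lam0) ^ l) • L) X :=
      dirichletEnergy_mono (aeval_gpnnFilter_mul_mul_le hL.nonneg (le_iff.2 hIL) hspec α l) X
    _ = (α ^ 2 + (1 - lam0) ^ l) • dirichletEnergy L X := dirichletEnergy_smul _ L X

end DirichletEnergy

/-- Proposition 2 (upper bound): `E(αX + (1−α)P^l X) ≤ (α² + (1−λ₀)^l) E(X)`. -/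
theorem gpnn_energy_upper_bound (n d : ℕ) (L : Matrix (Fin n) (Fin n) ℝ)
    (hL : L.PosSemidef) (hIL : ((1 : Matrix (Fin n) (Fin n) ℝ) - L).PosSemidef)
    (P : Matrix (Fin n) (Fin n) ℝ) (hP : P = 1 - L)
    (lam0 : ℝ) (hlam0 : 0 < lam0) (hlam1 : lam0 ≤ 1)
    (hspec : ∀ μ ∈ spectrum ℝ L, μ ≠ 0 → lam0 ≤ μ)
    (X : Matrix (Fin n) (Fin d) ℝ) (l : ℕ) (α : ℝ) (hα0 : 0 ≤ α) (hα1 : α ≤ 1) :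
    ((α • X + (1 - α) • (P ^ l * X))ᵀ * L *
        (α • X + (1 - α) • (P ^ l * X))).trace ≤
      (α ^ 2 + (1 - lam0) ^ l) * (Xᵀ * L * X).trace := by
  subst hP
  simpa only [dirichletEnergy, conjTranspose_eq_transpose_of_trivial, smul_eq_mul] using
    gpnn_energy_upper_bound_general hL hIL hspec X l α
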